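/- arXiv:1508.01454 — 4 statements merged into one kernel-verified Lean document; each statement's English description precedes it below -/
import Mathlib

section
/- In an exact potential game with finite strategy sets, every improvement path is finite: there is no infinite sequence of strategy profiles s⁰, s¹, s², … such that for every n there exist a player i and a strategy x with sⁿ⁺¹ = Function.update sⁿ i x and θ i (sⁿ⁺¹) > θ i (sⁿ). -/
/-- In an exact potential game with finite strategy sets, every improvement path
is finite: there is no infinite sequence of single-player strictly improving
unilateral deviations. -/
theorem stmt_3 {ι : Type*} [Fintype ι] [DecidableEq ι] {S : ι → Type*}
    [∀ i, Fintype (S i)] [∀ i, Nonempty (S i)]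
    (θ : ι → (∀ j, S j) → ℝ) (P : (∀ j, S j) → ℝ)
    (hpot : ∀ (i : ι) (s : ∀ j, S j) (x : S i),
      θ i (Function.update s i x) - θ i s = P (Function.update s i x) - P s) :
    ¬ ∃ s : ℕ → ∀ j, S j, ∀ n : ℕ, ∃ (i : ι) (x : S i),
        s (n + 1) = Function.update (s n) i x ∧ θ i (s (n + 1)) > θ i (s n) := by
  rintro ⟨s, hs⟩
  have hmono : StrictMono (fun n => P (s n)) := by
    refine strictMono_nat_of_lt_succ fun n => ?_
    obtain ⟨i, x, hx, hlt⟩ := hs n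
    have h := hpot i (s n) x
    rw [← hx] at h
    show P (s n) < P (s (n + 1))
    linarith
  have hinj : Function.Injective s := fun a b hab =>
    hmono.injective (congrArg P hab)
  exact not_injective_infinite_finite s hinj
end

section
/- Every exact potential game in which the player set is a finite type and every strategy set is a nonempty finite type possesses a pure Nash equilibrium. -/
/-- Every exact potential game with finitely many players and nonempty finite
strategy sets possesses a pure Nash equilibrium. -/
theorem stmt_5 {ι : Type*} [Fintype ι] [DecidableEq ι] {S : ι → Type*}
    [∀ i, Fintype (S i)] [∀ i, Nonempty (S i)]
    (θ : ι → (∀ j, S j) → ℝ) (P : (∀ j, S j) → ℝ)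
    (hpot : ∀ (i : ι) (s : ∀ j, S j) (x : S i),
      θ i (Function.update s i x) - θ i s = P (Function.update s i x) - P s) :
    ∃ s : ∀ j, S j, ∀ (i : ι) (x : S i),
      θ i (Function.update s i x) ≤ θ i s := by
  obtain ⟨s, hs⟩ := Finite.exists_max P
  refine ⟨s, fun i x => ?_⟩
  have h1 := hpot i s x
  have h2 := hs (Function.update s i x)
  linarith
end

section
/- If the global objective is a sum of local terms, P s = Σ_{j ∈ J} f j s, where each f j depends only on the coordinates in A j, and each player's local profit collects exactly the terms that involve that player, θ i s = Σ_{j : i ∈ A j} f j s, then the exact potential equality holds: for every player i, every profile s, and every strategy x ∈ S i, P (Function.update s i x) - P s = θ i (Function.update s i x) - θ i s. (This is equation (10) of the paper, establishing that the local profit functions together with the global objective form an exact potential game.) -/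
/-- If the global objective is a sum of local terms, each depending only on the
players in `A j`, and each player's local profit collects exactly the terms
involving that player, then the exact potential equality holds. -/
theorem stmt_7 {ι J : Type*} [Fintype ι] [Fintype J] [DecidableEq ι]
    {S : ι → Type*} (A : J → Set ι) [∀ (i : ι) (j : J), Decidable (i ∈ A j)]
    (f : J → (∀ i, S i) → ℝ)
    (hdep : ∀ (j : J) (s s' : ∀ i, S i), (∀ i ∈ A j, s i = s' i) → f j s = f j s')
    (P : (∀ i, S i) → ℝ) (θ : ι → (∀ i, S i) → ℝ)
    (hP : ∀ s : ∀ i, S i, P s = ∑ j : J, f j s)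
    (hθ : ∀ (i : ι) (s : ∀ i, S i),
      θ i s = ∑ j ∈ Finset.univ.filter (fun j : J => i ∈ A j), f j s) :
    ∀ (i : ι) (s : ∀ i, S i) (x : S i),
      P (Function.update s i x) - P s =
        θ i (Function.update s i x) - θ i s := by
  intro i s x
  rw [hP, hP, hθ, hθ, ← Finset.sum_sub_distrib, ← Finset.sum_sub_distrib, Finset.sum_filter]
  refine Finset.sum_congr rfl fun j _ => ?_
  split_ifs with h
  · rfl
  · rw [hdep j (Function.update s i x) s, sub_self]
    intro k hk
    have hki : k ≠ i := fun e => h (e ▸ hk)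
    exact Function.update_of_ne hki x s
end

section
/- Let I be a finite set of players that are pairwise non-interacting, meaning that for all distinct k, k' ∈ I there is no local term index j with both k ∈ A j and k' ∈ A j. If the profile s' agrees with s on all players outside I, then the change in the global objective decomposes as the sum of the individual local-profit changes: P s' - P s = Σ_{k ∈ I} (θ k (Function.update s k (s' k)) - θ k s). In particular, if every k ∈ I strictly improves its local profit by its own unilateral deviation (θ k (Function.update s k (s' k)) > θ k s), then the simultaneous update strictly increases the global objective: P s' > P s. -/
/-- For a set `I` of pairwise non-interacting players, the change in the global
objective under a simultaneous update of the players in `I` decomposes as the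
sum of individual local-profit changes; in particular, if every player of the
nonempty set `I` strictly improves by its own unilateral deviation, then the
simultaneous update strictly increases the global objective. -/
theorem stmt_9 {ι J : Type*} [Fintype ι] [Fintype J] [DecidableEq ι]
    {S : ι → Type*} (A : J → Set ι) [∀ (i : ι) (j : J), Decidable (i ∈ A j)]
    (f : J → (∀ i, S i) → ℝ)
    (hdep : ∀ (j : J) (s s' : ∀ i, S i), (∀ i ∈ A j, s i = s' i) → f j s = f j s')
    (P : (∀ i, S i) → ℝ) (θ : ι → (∀ i, S i) → ℝ)
    (hP : ∀ s : ∀ i, S i, P s = ∑ j : J, f j s)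
    (hθ : ∀ (i : ι) (s : ∀ i, S i),
      θ i s = ∑ j ∈ Finset.univ.filter (fun j : J => i ∈ A j), f j s)
    (I : Finset ι)
    (hpair : ∀ k ∈ I, ∀ k' ∈ I, k ≠ k' → ∀ j : J, ¬(k ∈ A j ∧ k' ∈ A j))
    (s s' : ∀ i, S i) (hagree : ∀ i : ι, i ∉ I → s' i = s i) :
    P s' - P s = ∑ k ∈ I, (θ k (Function.update s k (s' k)) - θ k s) ∧
      (I.Nonempty → (∀ k ∈ I, θ k (Function.update s k (s' k)) > θ k s) →
        P s' > P s) := by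
  have key : P s' - P s = ∑ k ∈ I, (θ k (Function.update s k (s' k)) - θ k s) := by
    simp only [hP, hθ, ← Finset.sum_sub_distrib, Finset.sum_filter]
    rw [Finset.sum_comm]
    refine Finset.sum_congr rfl fun j _ => ?_
    by_cases h : ∃ k ∈ I, k ∈ A j
    · obtain ⟨k, hkI, hkA⟩ := h
      rw [Finset.sum_eq_single_of_mem k hkI]
      · have e : f j s' = f j (Function.update s k (s' k)) := by
          apply hdep
          intro i hi
          by_cases hik : i = k
          · subst hik
            simp
          · rw [Function.update_of_ne hik]
            exact hagree i fun hiI => hpair i hiI k hkI hik j ⟨hi, hkA⟩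
        simp [hkA, e]
      · intro b hb hbk
        have hbA : b ∉ A j := fun hbA => hpair b hb k hkI hbk j ⟨hbA, hkA⟩
        simp [hbA]
    · push Not at h
      have e : f j s' = f j s :=
        hdep j _ _ fun i hi => hagree i fun hiI => h i hiI hi
      rw [e, sub_self]
      symm
      apply Finset.sum_eq_zero
      intro k hk
      simp [h k hk]
  refine ⟨key, fun hne himp => ?_⟩
  have hpos : 0 < ∑ k ∈ I, (θ k (Function.update s k (s' k)) - θ k s) :=
    Finset.sum_pos (fun k hk => sub_pos.mpr (himp k hk)) hne
  rw [← key] at hpos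
  exact sub_pos.mp hpos
end
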